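/- arXiv:2110.12092 — 5 statements merged into one kernel-verified Lean document; each statement's English description precedes it below -/
import Mathlib

section
/- Let E be a separable Banach space, p ∈ (1, ∞) and p* = p/(p−1). Let (x_n)_{n≥1} be a sequence in E that is weakly p-summable and (y_n)_{n≥1} a sequence in E* that is *-weakly p*-summable. Then ((x_n, y_n))_{n≥1} is a besselian pair of E; that is, there exists a constant A > 0 such that ∑_{n=1}^∞ |y_n(x)| · |y(x_n)| ≤ A‖x‖‖y‖ for all x ∈ E and y ∈ E*. -/
open Filter Topology

theorem besselian_aux
    {E F : Type*} [NormedAddCommGroup E] [NormedSpace ℝ E] [CompleteSpace E]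
    [NormedAddCommGroup F] [NormedSpace ℝ F] [CompleteSpace F]
    (y : ℕ → E →L[ℝ] ℝ) (z : ℕ → F →L[ℝ] ℝ)
    (hS : ∀ (v : E) (w : F), Summable (fun n => |y n v| * |z n w|)) :
    ∃ A > (0 : ℝ), ∀ (v : E) (w : F),
      Summable (fun n => |y n v| * |z n w|) ∧
      ∑' n, |y n v| * |z n w| ≤ A * ‖v‖ * ‖w‖ := by
  let T : (Finset ℕ × {e : ℕ → ℝ // ∀ n, |e n| ≤ 1}) → E →L[ℝ] F →L[ℝ] ℝ :=
    fun i => ∑ n ∈ i.1, i.2.1 n • (y n).smulRight (z n)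
  have hT : ∀ i v w, T i v w = ∑ n ∈ i.1, i.2.1 n * (y n v * z n w) := by
    intro i v w
    simp [T, sum_apply]
  have hb : ∀ i v w, ‖T i v w‖ ≤ ∑' n, |y n v| * |z n w| := by
    intro i v w
    rw [hT]
    refine (norm_sum_le _ _).trans (le_trans (Finset.sum_le_sum fun n _ => ?_)
      ((hS v w).sum_le_tsum i.1 (fun n _ => by positivity)))
    rw [Real.norm_eq_abs, abs_mul, abs_mul]
    exact mul_le_of_le_one_left (by positivity) (i.2.2 n)
  obtain ⟨C, hC⟩ := banach_steinhaus (E := E) (F := F →L[ℝ] ℝ) (g := T) (fun v =>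
    banach_steinhaus (g := fun i => T i v) (fun w => ⟨_, fun i => hb i v w⟩))
  refine ⟨max C 1, by positivity, fun v w => ⟨hS v w, (hS v w).tsum_le_of_sum_le fun s => ?_⟩⟩
  let e : ℕ → ℝ := fun n => if 0 ≤ y n v * z n w then 1 else -1
  have he : ∀ n, |e n| ≤ 1 := by
    intro n
    simp only [e]
    split_ifs <;> simp
  have h1 : ∑ n ∈ s, |y n v| * |z n w| = T (s, ⟨e, he⟩) v w := by
    rw [hT]
    refine Finset.sum_congr rfl fun n _ => ?_
    rw [← abs_mul]
    simp only [e]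
    split_ifs with h
    · rw [abs_of_nonneg h, one_mul]
    · rw [abs_of_neg (not_le.mp h), neg_one_mul]
  rw [h1]
  calc T (s, ⟨e, he⟩) v w ≤ ‖T (s, ⟨e, he⟩) v w‖ := Real.le_norm_self _
    _ ≤ ‖T (s, ⟨e, he⟩)‖ * ‖v‖ * ‖w‖ := ContinuousLinearMap.le_opNorm₂ _ _ _
    _ ≤ max C 1 * ‖v‖ * ‖w‖ := by
      gcongr
      exact (hC _).trans (le_max_left _ _)

/-- If `(x n)` is weakly `p`-summable in a separable Banach space `E` and `(y n)` is
*-weakly `p*`-summable in `E*` (with `p* = p/(p-1)`), then `((x n, y n))` is a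
besselian pair of `E`. -/
theorem weakly_summable_pair_is_besselian
    {E : Type*} [NormedAddCommGroup E] [NormedSpace ℝ E] [CompleteSpace E]
    [TopologicalSpace.SeparableSpace E]
    (p : ℝ) (hp : 1 < p) (x : ℕ → E) (y : ℕ → E →L[ℝ] ℝ)
    (hx : ∀ f : E →L[ℝ] ℝ, Summable fun n => |f (x n)| ^ p)
    (hy : ∀ v : E, Summable fun n => |y n v| ^ (p / (p - 1))) :
    ∃ A > (0 : ℝ), ∀ (v : E) (w : E →L[ℝ] ℝ),
      Summable (fun n => |y n v| * |w (x n)|) ∧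
      ∑' n, |y n v| * |w (x n)| ≤ A * ‖v‖ * ‖w‖ := by
  have hpq : (p / (p - 1)).HolderConjugate p :=
    (Real.HolderConjugate.conjExponent hp).symm
  have hS : ∀ (v : E) (w : E →L[ℝ] ℝ), Summable (fun n => |y n v| * |w (x n)|) := fun v w =>
    (Real.summable_and_inner_le_Lp_mul_Lq_tsum_of_nonneg hpq (fun _ => abs_nonneg _)
      (fun _ => abs_nonneg _) (hy v) (hx w)).1
  exact besselian_aux y
    (fun n => ContinuousLinearMap.flip (ContinuousLinearMap.id ℝ (E →L[ℝ] ℝ)) (x n)) hS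
end

section
/- If a separable Banach space E has a Schauder frame ((a_n, b_n))_{n≥1}, then E has the approximation property: for every compact subset K of E and every ε > 0 there exists a finite-rank bounded linear operator T : E → E such that ‖T(x) − x‖ ≤ ε for all x ∈ K. -/
open Filter Topology

/-- `((a n, b n))` is a Schauder frame of `E`: the partial sums `∑_{j<n} b j x • a j`
converge in norm to `x` for every `x ∈ E`. -/
def IsSchauderFrame {E : Type*} [NormedAddCommGroup E] [NormedSpace ℝ E]
    (a : ℕ → E) (b : ℕ → E →L[ℝ] ℝ) : Prop :=
  ∀ x : E, Tendsto (fun n => ∑ j ∈ Finset.range n, b j x • a j) atTop (𝓝 x)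

/-- If a separable Banach space `E` has a Schauder frame, then `E` has the
approximation property. -/
theorem schauderFrame_implies_approximation_property
    {E : Type*} [NormedAddCommGroup E] [NormedSpace ℝ E] [CompleteSpace E]
    [TopologicalSpace.SeparableSpace E]
    (a : ℕ → E) (b : ℕ → E →L[ℝ] ℝ) (h : IsSchauderFrame a b) :
    ∀ K : Set E, IsCompact K → ∀ ε > (0 : ℝ),
      ∃ T : E →L[ℝ] E,
        FiniteDimensional ℝ (LinearMap.range (T : E →ₗ[ℝ] E)) ∧
        ∀ x ∈ K, ‖T x - x‖ ≤ ε := by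
  intro K hK ε hε
  let S : ℕ → E →L[ℝ] E := fun n => ∑ j ∈ Finset.range n, (b j).smulRight (a j)
  have hS : ∀ n x, S n x = ∑ j ∈ Finset.range n, b j x • a j := by
    intro n x
    simp [S]
  have hT : ∀ x, Tendsto (fun n => S n x) atTop (𝓝 x) := by
    intro x
    simp only [hS]
    exact h x
  obtain ⟨C, hC⟩ : ∃ C, ∀ n, ‖S n‖ ≤ C := by
    apply banach_steinhaus
    intro x
    obtain ⟨c, hc⟩ := (hT x).norm.bddAbove_range
    exact ⟨c, fun n => hc ⟨n, rfl⟩⟩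
  have hC0 : 0 ≤ C := (norm_nonneg _).trans (hC 0)
  have hδ : 0 < ε / (2 * (C + 1)) := by positivity
  obtain ⟨t, -, htf, htK⟩ := hK.finite_cover_balls hδ
  have hev : ∀ᶠ n in atTop, ∀ y ∈ t, ‖S n y - y‖ < ε / 2 := by
    rw [eventually_all_finite htf]
    intro y _
    have := (Metric.tendsto_nhds.1 (hT y)) (ε / 2) (by positivity)
    simpa only [dist_eq_norm] using this
  obtain ⟨n, hn⟩ := hev.exists
  refine ⟨S n, ?_, ?_⟩
  · have hle : LinearMap.range (S n : E →ₗ[ℝ] E) ≤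
        Submodule.span ℝ (a '' (Finset.range n : Set ℕ)) := by
      rintro _ ⟨x, rfl⟩
      change S n x ∈ _
      rw [hS]
      exact Submodule.sum_mem _ fun j hj => Submodule.smul_mem _ _
        (Submodule.subset_span ⟨j, hj, rfl⟩)
    haveI : FiniteDimensional ℝ (Submodule.span ℝ (a '' (Finset.range n : Set ℕ))) :=
      FiniteDimensional.span_of_finite ℝ ((Finset.finite_toSet _).image _)
    exact Submodule.finiteDimensional_of_le hle
  · intro x hx
    obtain ⟨y, hy, hxy⟩ := Set.mem_iUnion₂.1 (htK hx)
    rw [Metric.mem_ball, dist_eq_norm] at hxy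
    have h1 : ‖S n (x - y)‖ ≤ C * ‖x - y‖ := (S n).le_of_opNorm_le (hC n) _
    have h2 := hn y hy
    have h3 : S n x - x = S n (x - y) + (S n y - y) - (x - y) := by
      rw [map_sub]; abel
    have h4 : (C + 1) * ‖x - y‖ ≤ ε / 2 := by
      calc (C + 1) * ‖x - y‖ ≤ (C + 1) * (ε / (2 * (C + 1))) := by gcongr
        _ = ε / 2 := by field_simp
    rw [h3]
    have h5 := norm_sub_le (S n (x - y) + (S n y - y)) (x - y)
    have h6 := norm_add_le (S n (x - y)) (S n y - y)
    linarith
end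

section
/- Let E be a separable Banach space and ((a_n, b_n))_{n≥1} a Schauder frame of E. If ∑_{n=1}^∞ ‖a_n‖·‖b_n‖ < ∞, then E is finite dimensional. -/
open Filter Topology

/-- If a separable Banach space `E` has a Schauder frame `((a n, b n))` with
`∑ ‖a n‖ ‖b n‖ < ∞`, then `E` is finite dimensional. -/
theorem schauderFrame_summable_norms_implies_finiteDimensional
    {E : Type*} [NormedAddCommGroup E] [NormedSpace ℝ E] [CompleteSpace E]
    [TopologicalSpace.SeparableSpace E]
    (a : ℕ → E) (b : ℕ → E →L[ℝ] ℝ) (h : IsSchauderFrame a b)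
    (hsum : Summable fun n => ‖a n‖ * ‖b n‖) :
    FiniteDimensional ℝ E := by
  have hs : Summable fun n => (b n).smulRight (a n) := by
    apply Summable.of_norm
    simpa [ContinuousLinearMap.norm_smulRight_apply, mul_comm] using hsum
  obtain ⟨T, hT⟩ := hs
  have ht := hT.tendsto_sum_nat
  have hT1 : T = 1 := by
    ext x
    have h1 := ((ContinuousLinearMap.apply ℝ E x).continuous.tendsto T).comp ht
    refine tendsto_nhds_unique h1 ?_
    have h2 := h x
    refine h2.congr fun n => ?_
    simp [ContinuousLinearMap.sum_apply]
  subst hT1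
  have hev := ht.eventually (Units.isOpen.mem_nhds (isUnit_one : IsUnit (1 : E →L[ℝ] E)))
  obtain ⟨n, u, hu⟩ := hev.exists
  have htop : Submodule.span ℝ (a '' (Finset.range n : Set ℕ)) = ⊤ := by
    rw [eq_top_iff]
    intro x _
    have hx : (u : E →L[ℝ] E) ((↑u⁻¹ : E →L[ℝ] E) x) = x := by
      rw [← ContinuousLinearMap.mul_apply, Units.mul_inv]; rfl
    rw [← hx, hu, ContinuousLinearMap.sum_apply]
    refine Submodule.sum_mem _ fun j hj => ?_
    exact Submodule.smul_mem _ _ (Submodule.subset_span ⟨j, by simpa using hj, rfl⟩)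
  exact Module.Finite.of_fg_top
    (htop ▸ Submodule.fg_span ((Finset.finite_toSet _).image a))
end

section
/- Let E be a weakly sequentially complete separable Banach space and ((a_n, b_n))_{n≥1} a besselian pair of E. Then for every x ∈ E the series ∑_n b_n(x) a_n is unconditionally convergent in E (i.e., the family (b_n(x) a_n)_{n≥1} has a sum in the sense of unordered/net summability). -/
open Filter Topology

/-- `E` is weakly sequentially complete: every weakly Cauchy sequence is weakly
convergent. -/
def WeaklySequentiallyComplete (E : Type*) [NormedAddCommGroup E] [NormedSpace ℝ E] : Prop :=
  ∀ x : ℕ → E,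
    (∀ y : E →L[ℝ] ℝ, ∃ l : ℝ, Tendsto (fun n => y (x n)) atTop (𝓝 l)) →
    ∃ x₀ : E, ∀ y : E →L[ℝ] ℝ, Tendsto (fun n => y (x n)) atTop (𝓝 (y x₀))

/-- `((a n, b n))` is a besselian pair of `E`: there is `A > 0` such that
`∑ |b n x| |y (a n)| ≤ A ‖x‖ ‖y‖` for all `x ∈ E`, `y ∈ E*`. -/
def IsBesselianPair {E : Type*} [NormedAddCommGroup E] [NormedSpace ℝ E]
    (a : ℕ → E) (b : ℕ → E →L[ℝ] ℝ) : Prop :=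
  ∃ A > (0 : ℝ), ∀ (x : E) (y : E →L[ℝ] ℝ),
    Summable (fun n => |b n x| * |y (a n)|) ∧
    ∑' n, |b n x| * |y (a n)| ≤ A * ‖x‖ * ‖y‖

theorem wuc_summable_aux
    {E : Type*} [NormedAddCommGroup E] [NormedSpace ℝ E] [CompleteSpace E]
    [TopologicalSpace.SeparableSpace E]
    (hE : WeaklySequentiallyComplete E) (c : ℕ → E)
    (hc : ∀ y : E →L[ℝ] ℝ, Summable fun n => |y (c n)|) : Summable c := by
  classical
  -- weak sums of all subseries
  have hX : ∀ A : ℕ → Bool, ∃ x : E, ∀ y : E →L[ℝ] ℝ,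
      HasSum (fun j => if A j then y (c j) else 0) (y x) := by
    intro A
    have hs : ∀ y : E →L[ℝ] ℝ, Summable (fun j => if A j then y (c j) else 0) := by
      intro y
      refine Summable.of_norm_bounded (hc y) fun j => ?_
      by_cases hj : A j <;> simp [hj]
    have he : ∀ (y : E →L[ℝ] ℝ) (n : ℕ),
        y (∑ j ∈ Finset.range n, if A j then c j else 0) =
          ∑ j ∈ Finset.range n, if A j then y (c j) else 0 := by
      intro y n
      rw [map_sum]
      refine Finset.sum_congr rfl fun j _ => ?_
      by_cases hj : A j <;> simp [hj]
    obtain ⟨x, hx⟩ := hE (fun n => ∑ j ∈ Finset.range n, if A j then c j else 0) (fun y =>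
      ⟨_, by simpa only [he] using (hs y).hasSum.tendsto_sum_nat⟩)
    refine ⟨x, fun y => ?_⟩
    have h1 := hx y
    simp only [he] at h1
    have h2 := tendsto_nhds_unique h1 (hs y).hasSum.tendsto_sum_nat
    rw [h2]
    exact (hs y).hasSum
  choose X hX using hX
  have hcont : ∀ y : E →L[ℝ] ℝ, Continuous fun A => y (X A) := by
    intro y
    have : (fun A => y (X A)) = fun A => ∑' j, if A j then y (c j) else 0 := by
      funext A
      exact (hX A y).tsum_eq.symm
    rw [this]
    refine continuous_tsum (fun j => ?_) (hc y) (fun j A => ?_)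
    · exact (continuous_of_discreteTopology (f := fun t : Bool => if t then y (c j) else 0)).comp
        (continuous_apply j)
    · by_cases hj : A j <;> simp [hj]
  by_contra hns
  rw [summable_iff_vanishing_norm] at hns
  push Not at hns
  obtain ⟨ε, hε, hF⟩ := hns
  choose F hFd hFn using fun k : ℕ => hF (Finset.range k)
  choose Y hY1 hY2 using fun k : ℕ => exists_dual_vector'' ℝ (∑ j ∈ F k, c j)
  obtain ⟨w, -, φ, hφ, hw⟩ := WeakDual.isSeqCompact_closedBall ℝ E 0 1
    (x := fun k => StrongDual.toWeakDual (Y k)) (fun k => by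
      simpa using hY1 k)
  have hw' : ∀ x : E, Tendsto (fun k => Y (φ k) x) atTop (𝓝 (w x)) := fun x =>
    (WeakBilin.tendsto_iff_forall_eval_tendsto _ ContinuousLinearMap.coe_injective).1 hw x
  let y : E →L[ℝ] ℝ := WeakDual.toStrongDual w
  let z : ℕ → E →L[ℝ] ℝ := fun k => Y (φ k) - y
  have hz : ∀ x : E, Tendsto (fun k => z k x) atTop (𝓝 0) := by
    intro x
    have := (hw' x).sub_const (w x)
    rw [sub_self] at this
    exact this
  -- Baire
  obtain ⟨N, A, hA⟩ := nonempty_interior_of_iUnion_of_closed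
    (f := fun N : ℕ => {A : ℕ → Bool | ∀ k, N ≤ k → |z k (X A)| ≤ ε / 8})
    (fun N => by
      simp only [Set.setOf_forall]
      exact isClosed_iInter fun k => isClosed_iInter fun _ =>
        isClosed_le (hcont (z k)).abs continuous_const)
    (by
      refine Set.eq_univ_of_forall fun A => Set.mem_iUnion.2 ?_
      have h0 : Tendsto (fun k => |z k (X A)|) atTop (𝓝 0) := by
        simpa using (hz (X A)).abs
      obtain ⟨N, hN⟩ := eventually_atTop.1 (h0.eventually_le_const (show 0 < ε / 8 by positivity))
      exact ⟨N, hN⟩)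
  have hnot : ∀ j k, j < k → j ∉ F (φ k) := by
    intro j k hjk hj
    exact Finset.disjoint_left.1 (hFd (φ k)) hj
      (Finset.mem_range.2 (hjk.trans_le (hφ.id_le k)))
  have hflip : ∀ t : Bool, Tendsto (fun k => fun j => if j ∈ F (φ k) then t else A j)
      atTop (𝓝 A) := by
    intro t
    rw [tendsto_pi_nhds]
    intro j
    refine tendsto_const_nhds.congr' ?_
    filter_upwards [eventually_gt_atTop j] with k hk
    simp [hnot j k hk]
  have hU := mem_interior_iff_mem_nhds.1 hA
  have hyv : ∀ᶠ k in atTop, |y (∑ j ∈ F (φ k), c j)| < ε / 4 := by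
    obtain ⟨s, hs⟩ := summable_iff_vanishing_norm.1 (hc y).of_abs (ε / 4) (by positivity)
    have : ∀ᶠ k in atTop, ∀ j ∈ s, j < k :=
      (Filter.eventually_all_finset s).2 fun j _ => eventually_gt_atTop j
    filter_upwards [this] with k hk
    rw [map_sum]
    exact hs _ (Finset.disjoint_right.2 fun j hj => hnot j k (hk j hj))
  obtain ⟨k, hk1, hk2, hk3, hkN⟩ := ((hflip true).eventually_mem hU |>.and
    ((hflip false).eventually_mem hU |>.and (hyv.and (eventually_ge_atTop N)))).exists
  have h1 := hk1 k hkN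
  have h2 := hk2 k hkN
  have hd := (hX (fun j => if j ∈ F (φ k) then true else A j) (z k)).sub
    (hX (fun j => if j ∈ F (φ k) then false else A j) (z k))
  have hd' := hd.unique (hasSum_sum_of_ne_finset_zero (s := F (φ k)) (fun j hj => by simp [hj]))
  have hd2 : z k (∑ j ∈ F (φ k), c j) =
      z k (X fun j => if j ∈ F (φ k) then true else A j)
        - z k (X fun j => if j ∈ F (φ k) then false else A j) := by
    rw [hd', map_sum]
    refine Finset.sum_congr rfl fun j hj => ?_
    simp [hj]
  have h3 : z k (∑ j ∈ F (φ k), c j) =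
      ‖∑ j ∈ F (φ k), c j‖ - y (∑ j ∈ F (φ k), c j) := by
    have := hY2 (φ k)
    simp only [RCLike.ofReal_real_eq_id, id] at this
    rw [← this]
    rfl
  have h4 := hFn (φ k)
  have := abs_le.1 h1
  have := abs_le.1 h2
  have := abs_lt.1 hk3
  linarith

/-- If `E` is a weakly sequentially complete separable Banach space and `((a n, b n))`
is a besselian pair of `E`, then for every `x ∈ E` the series `∑ b n x • a n` is
unconditionally convergent (i.e. the family is summable). -/
theorem besselianPair_unconditionally_convergent
    {E : Type*} [NormedAddCommGroup E] [NormedSpace ℝ E] [CompleteSpace E]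
    [TopologicalSpace.SeparableSpace E]
    (hE : WeaklySequentiallyComplete E)
    (a : ℕ → E) (b : ℕ → E →L[ℝ] ℝ) (h : IsBesselianPair a b) :
    ∀ x : E, Summable fun n => b n x • a n := by
  obtain ⟨A, -, hA⟩ := h
  intro x
  refine wuc_summable_aux hE _ fun y => ?_
  simpa [abs_mul] using (hA x y).1
end

section
/- Let H be a separable real Hilbert space and (x_n)_{n≥1} a Hilbert frame of H, i.e., there are constants α, β > 0 with α‖x‖² ≤ ∑_{n=1}^∞ |⟨x_n, x⟩|² ≤ β‖x‖² for all x ∈ H. Then there exists a sequence (y_n)_{n≥1} in H such that ((x_n, ⟨y_n, ·⟩))_{n≥1} is a besselian Schauder frame of H: for every x ∈ H the partial sums ∑_{j=1}^n ⟨y_j, x⟩ x_j converge in norm to x, and there is a constant C > 0 with ∑_{n=1}^∞ |⟨y_n, x⟩| · |⟨x_n, y⟩| ≤ C‖x‖‖y‖ for all x, y ∈ H. -/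
open Filter Topology
open scoped RealInnerProductSpace

/-- If `(x n)` is a Hilbert frame of a separable real Hilbert space `H`, then there is
a sequence `(y n)` in `H` such that `((x n, ⟪y n, ·⟫))` is a besselian Schauder frame
of `H`. -/
theorem hilbertFrame_gives_besselianSchauderFrame
    {H : Type*} [NormedAddCommGroup H] [InnerProductSpace ℝ H] [CompleteSpace H]
    [TopologicalSpace.SeparableSpace H]
    (x : ℕ → H) (α β : ℝ) (hα : 0 < α) (hβ : 0 < β)
    (hframe : ∀ v : H, Summable (fun n => |⟪x n, v⟫| ^ 2) ∧
      α * ‖v‖ ^ 2 ≤ ∑' n, |⟪x n, v⟫| ^ 2 ∧ ∑' n, |⟪x n, v⟫| ^ 2 ≤ β * ‖v‖ ^ 2) :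
    ∃ y : ℕ → H,
      (∀ v : H, Tendsto (fun n => ∑ j ∈ Finset.range n, ⟪y j, v⟫ • x j) atTop (𝓝 v)) ∧
      ∃ C > (0 : ℝ), ∀ v w : H,
        Summable (fun n => |⟪y n, v⟫| * |⟪x n, w⟫|) ∧
        ∑' n, |⟪y n, v⟫| * |⟪x n, w⟫| ≤ C * ‖v‖ * ‖w‖ := by
  classical
  have hmem : ∀ v : H, Memℓp (E := fun _ : ℕ => ℝ) (fun n => ⟪x n, v⟫) 2 := by
    intro v
    refine memℓp_gen ?_
    simpa using (hframe v).1
  let T₀ : H →ₗ[ℝ] lp (fun _ : ℕ => ℝ) 2 :=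
    { toFun := fun v => ⟨fun n => ⟪x n, v⟫, hmem v⟩
      map_add' := by
        intro v w
        ext n
        exact inner_add_right _ _ _
      map_smul' := by
        intro c v
        ext n
        simp [inner_smul_right] }
  have hT₀ : ∀ v n, T₀ v n = ⟪x n, v⟫ := fun v n => rfl
  have hnorm : ∀ v, ‖T₀ v‖ ^ 2 = ∑' n, |⟪x n, v⟫| ^ 2 := by
    intro v
    have h := lp.norm_rpow_eq_tsum (p := 2) (by norm_num) (T₀ v)
    simpa [hT₀] using h
  let T : H →L[ℝ] lp (fun _ : ℕ => ℝ) 2 := T₀.mkContinuous (Real.sqrt β) (by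
    intro v
    refine le_of_sq_le_sq ?_ (by positivity)
    rw [hnorm, mul_pow, Real.sq_sqrt hβ.le]
    exact (hframe v).2.2)
  have hT : ∀ v n, T v n = ⟪x n, v⟫ := fun v n => rfl
  let B : H →L[ℝ] H →L[ℝ] ℝ := (innerSL ℝ).bilinearComp T T
  have hB : ∀ v w, B v w = ⟪T v, T w⟫ := fun v w => rfl
  have hc : IsCoercive B := by
    refine ⟨α, hα, fun u => ?_⟩
    rw [hB, real_inner_self_eq_norm_sq]
    have h1 : ‖T u‖ ^ 2 = _ := hnorm u
    rw [h1, mul_assoc, ← sq]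
    exact (hframe u).2.1
  let e := hc.continuousLinearEquivOfBilin
  have he : ∀ v, (ContinuousLinearMap.adjoint T) (T v) = e v := by
    intro v
    refine ext_inner_right ℝ fun w => ?_
    rw [ContinuousLinearMap.adjoint_inner_left, hc.continuousLinearEquivOfBilin_apply, hB]
  have hs : ∀ n (a : ℝ), (ContinuousLinearMap.adjoint T) (lp.single 2 n a) = a • x n := by
    intro n a
    refine ext_inner_right ℝ fun w => ?_
    rw [ContinuousLinearMap.adjoint_inner_left, lp.inner_single_left, hT, inner_smul_left]
    simp [mul_comm]
  let R : H →L[ℝ] H := (e.symm : H →L[ℝ] H)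
  have hy : ∀ n v, ⟪(ContinuousLinearMap.adjoint R) (x n), v⟫ = T (R v) n := by
    intro n v
    rw [ContinuousLinearMap.adjoint_inner_left, hT]
  refine ⟨fun n => (ContinuousLinearMap.adjoint R) (x n), fun v => ?_, ?_⟩
  · have h := (lp.hasSum_single (p := 2) (by norm_num) (T (R v))).mapL
      (ContinuousLinearMap.adjoint T)
    rw [he] at h
    have hR : e (R v) = v := e.apply_symm_apply v
    rw [hR] at h
    have h2 := h.tendsto_sum_nat
    simpa only [hs, hy] using h2
  · refine ⟨‖T‖ * ‖R‖ * ‖T‖ + 1, by positivity, fun v w => ?_⟩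
    have h := lp.tsum_mul_le_mul_norm (p := 2) (q := 2)
      (by simpa using Real.HolderConjugate.two_two) (T (R v)) (T w)
    simp only [hy, ← hT _ _]
    refine ⟨h.1, h.2.trans ?_⟩
    calc ‖T (R v)‖ * ‖T w‖ ≤ (‖T‖ * (‖R‖ * ‖v‖)) * (‖T‖ * ‖w‖) := by
          gcongr
          · exact (T.le_opNorm _).trans (by gcongr; exact R.le_opNorm _)
          · exact T.le_opNorm _
      _ ≤ (‖T‖ * ‖R‖ * ‖T‖ + 1) * ‖v‖ * ‖w‖ := by
          have : 0 ≤ ‖v‖ * ‖w‖ := by positivity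
          nlinarith
end
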